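/- (Local optima are asymptotically valid estimators, deterministic core.) Let g : ℝ^p → ℝ^m be continuously differentiable on a convex compact set Θ with Jacobian G, Lipschitz with constant L, let W be symmetric positive definite with λ_max(W) ≤ λ̄_W, and let θ̂ ∈ Θ satisfy G(θ̂)ᵀ W g(θ̂) = 0. Suppose s := min over θ₁ ∈ Θ of σ_min[G(θ₁)ᵀ W Ḡ(θ₁)] > 0, where Ḡ(θ₁) := ∫₀¹ G(θ̂ + t(θ₁ − θ̂)) dt, and let C₁ := max_{θ∈Θ} σ_max[G(θ)ᵀW^{1/2}] / s. Then any θ ∈ Θ satisfying G(θ)ᵀ W g(θ) = 0 obeys ‖θ − θ̂‖ ≤ (L·√λ̄_W·C₁ / s)·‖g(θ̂)‖²_W. -/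

import Mathlib

open Matrix Set MeasureTheory
open scoped BigOperators

noncomputable section

/-- Euclidean norm of a vector in `Fin n → ℝ`. -/
def enorm' {n : ℕ} (v : Fin n → ℝ) : ℝ := Real.sqrt (∑ i, v i ^ 2)

/-- Smallest singular value of a matrix. -/
def sigMin {m p : ℕ} (A : Matrix (Fin m) (Fin p) ℝ) : ℝ :=
  sInf {c : ℝ | ∃ v : Fin p → ℝ, enorm' v = 1 ∧ c = enorm' (A *ᵥ v)}

/-- Largest singular value of a matrix (operator norm). -/
def sigMax {m p : ℕ} (A : Matrix (Fin m) (Fin p) ℝ) : ℝ :=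
  sSup {c : ℝ | ∃ v : Fin p → ℝ, enorm' v = 1 ∧ c = enorm' (A *ᵥ v)}

/-- Smallest eigenvalue of a (symmetric) square matrix, via the Rayleigh quotient. -/
def lamMin {n : ℕ} (A : Matrix (Fin n) (Fin n) ℝ) : ℝ :=
  sInf {c : ℝ | ∃ v : Fin n → ℝ, enorm' v = 1 ∧ c = v ⬝ᵥ (A *ᵥ v)}

/-- Largest eigenvalue of a (symmetric) square matrix, via the Rayleigh quotient. -/
def lamMax {n : ℕ} (A : Matrix (Fin n) (Fin n) ℝ) : ℝ :=
  sSup {c : ℝ | ∃ v : Fin n → ℝ, enorm' v = 1 ∧ c = v ⬝ᵥ (A *ᵥ v)}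

/-- Weighted norm `‖v‖_W = √(vᵀ W v)`. -/
def wnorm {m : ℕ} (W : Matrix (Fin m) (Fin m) ℝ) (v : Fin m → ℝ) : ℝ :=
  Real.sqrt (v ⬝ᵥ (W *ᵥ v))

/-- A matrix viewed as a continuous linear map `ℝ^p → ℝ^m`. -/
def toCLM {m p : ℕ} (A : Matrix (Fin m) (Fin p) ℝ) : (Fin p → ℝ) →L[ℝ] (Fin m → ℝ) :=
  LinearMap.toContinuousLinearMap A.mulVecLin

/-!
Put `δ = θ - θhat` and `γ = g θhat`. Since `g θ = γ + Ḡ δ`, the first-order condition at `θ` reads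
`Gᵀ W Ḡ δ = -Gᵀ W γ` with `G = G θ`, so `s ‖δ‖ ≤ ‖Gᵀ W γ‖`. The right-hand side is estimated twice.
Splitting `W = Sᵀ S` gives `‖δ‖ ≤ C₁ ‖γ‖_W`. Subtracting the first-order condition at
`θhat` replaces `G` by `G - G θhat`, which is at most `L ‖δ‖`, and gives
`s ‖δ‖ ≤ L ‖δ‖ √λ̄_W ‖γ‖_W`. Inserting the first estimate into the second is the claim.
-/

section EuclideanNorm

variable {n : ℕ}

lemma enorm'_eq_norm_toLp (v : Fin n → ℝ) : enorm' v = ‖WithLp.toLp 2 v‖ := by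
  simp [enorm', EuclideanSpace.norm_eq]

lemma enorm'_nonneg (v : Fin n → ℝ) : 0 ≤ enorm' v := Real.sqrt_nonneg _

@[simp]
lemma enorm'_zero : enorm' (0 : Fin n → ℝ) = 0 := by
  simp [enorm']

@[simp]
lemma enorm'_neg (v : Fin n → ℝ) : enorm' (-v) = enorm' v := by
  simp [enorm']

lemma enorm'_smul (c : ℝ) (v : Fin n → ℝ) : enorm' (c • v) = |c| * enorm' v := by
  simp only [enorm'_eq_norm_toLp, WithLp.toLp_smul, norm_smul, Real.norm_eq_abs]

lemma enorm'_pos {v : Fin n → ℝ} (hv : v ≠ 0) : 0 < enorm' v := by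
  simpa [enorm'_eq_norm_toLp] using hv

lemma enorm'_inv_smul_self {v : Fin n → ℝ} (hv : v ≠ 0) : enorm' ((enorm' v)⁻¹ • v) = 1 := by
  have hpos := enorm'_pos hv
  rw [enorm'_smul, abs_of_pos (inv_pos.2 hpos), inv_mul_cancel₀ hpos.ne']

lemma enorm'_eq_sqrt_dotProduct_self (v : Fin n → ℝ) : enorm' v = √(v ⬝ᵥ v) := by
  simp only [enorm', dotProduct, sq]

lemma dotProduct_le_enorm'_mul_enorm' (v w : Fin n → ℝ) : v ⬝ᵥ w ≤ enorm' v * enorm' w :=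
  Real.sum_mul_le_sqrt_mul_sqrt Finset.univ v w

lemma continuous_enorm' : Continuous (enorm' : (Fin n → ℝ) → ℝ) := by
  unfold enorm'
  fun_prop

end EuclideanNorm

section SingularValues

open scoped Matrix.Norms.L2Operator

variable {k m p : ℕ}

lemma enorm'_mulVec_le_l2_opNorm_mul (A : Matrix (Fin m) (Fin p) ℝ) (v : Fin p → ℝ) :
    enorm' (A *ᵥ v) ≤ ‖A‖ * enorm' v := by
  rw [enorm'_eq_norm_toLp, enorm'_eq_norm_toLp]
  exact l2_opNorm_mulVec A (WithLp.toLp 2 v)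

lemma sigMax_eq_l2_opNorm (A : Matrix (Fin m) (Fin p) ℝ) : sigMax A = ‖A‖ := by
  have unit_le : ∀ v, enorm' v = 1 → enorm' (A *ᵥ v) ≤ ‖A‖ := fun v hv ↦ by
    simpa [hv] using enorm'_mulVec_le_l2_opNorm_mul A v
  refine le_antisymm (Real.sSup_le ?_ (norm_nonneg A)) ?_
  · rintro _ ⟨v, hv, rfl⟩
    exact unit_le v hv
  · refine ContinuousLinearMap.opNorm_le_of_unit_norm (Real.sSup_nonneg ?_) fun x hx ↦ ?_
    · rintro _ ⟨v, -, rfl⟩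
      exact enorm'_nonneg _
    · refine le_csSup ⟨‖A‖, ?_⟩ ⟨x.ofLp, ?_, ?_⟩
      · rintro _ ⟨v, hv, rfl⟩
        exact unit_le v hv
      · rw [enorm'_eq_norm_toLp, WithLp.toLp_ofLp, hx]
      · rw [enorm'_eq_norm_toLp]
        rfl

lemma sigMax_nonneg (A : Matrix (Fin m) (Fin p) ℝ) : 0 ≤ sigMax A :=
  sigMax_eq_l2_opNorm A ▸ norm_nonneg A

lemma enorm'_mulVec_le_sigMax_mul (A : Matrix (Fin m) (Fin p) ℝ) (v : Fin p → ℝ) :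
    enorm' (A *ᵥ v) ≤ sigMax A * enorm' v :=
  sigMax_eq_l2_opNorm A ▸ enorm'_mulVec_le_l2_opNorm_mul A v

lemma sigMax_transpose (A : Matrix (Fin m) (Fin p) ℝ) : sigMax Aᵀ = sigMax A := by
  rw [sigMax_eq_l2_opNorm, sigMax_eq_l2_opNorm, ← conjTranspose_eq_transpose_of_trivial,
    l2_opNorm_conjTranspose]

lemma continuous_sigMax : Continuous (sigMax : Matrix (Fin m) (Fin p) ℝ → ℝ) :=
  continuous_norm.congr fun A ↦ (sigMax_eq_l2_opNorm A).symm

lemma continuousOn_of_sigMax_sub_le {n : ℕ} {s : Set (Fin n → ℝ)}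
    {F : (Fin n → ℝ) → Matrix (Fin m) (Fin p) ℝ} {K : ℝ}
    (hF : ∀ x ∈ s, ∀ y ∈ s, sigMax (F x - F y) ≤ K * enorm' (x - y)) : ContinuousOn F s := by
  intro y hy
  have hbound : Filter.Tendsto (fun x ↦ K * enorm' (x - y)) (nhdsWithin y s) (nhds 0) := by
    have hcont : Continuous fun x ↦ K * enorm' (x - y) :=
      continuous_const.mul (continuous_enorm'.comp (continuous_id.sub continuous_const))
    simpa using (hcont.tendsto y).mono_left nhdsWithin_le_nhds
  refine tendsto_iff_norm_sub_tendsto_zero.2 (squeeze_zero' ?_ ?_ hbound)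
  · exact Filter.Eventually.of_forall fun _ ↦ norm_nonneg _
  · filter_upwards [self_mem_nhdsWithin] with x hx
    exact sigMax_eq_l2_opNorm (F x - F y) ▸ hF x hx y hy

lemma sigMin_nonneg (A : Matrix (Fin m) (Fin p) ℝ) : 0 ≤ sigMin A := by
  apply Real.sInf_nonneg
  rintro _ ⟨v, -, rfl⟩
  exact enorm'_nonneg _

lemma sigMin_le_of_enorm'_eq_one (A : Matrix (Fin m) (Fin p) ℝ) {v : Fin p → ℝ}
    (hv : enorm' v = 1) : sigMin A ≤ enorm' (A *ᵥ v) := by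
  refine csInf_le ⟨0, ?_⟩ ⟨v, hv, rfl⟩
  rintro _ ⟨w, -, rfl⟩
  exact enorm'_nonneg _

lemma sigMin_mul_enorm'_le (A : Matrix (Fin m) (Fin p) ℝ) (v : Fin p → ℝ) :
    sigMin A * enorm' v ≤ enorm' (A *ᵥ v) := by
  rcases eq_or_ne v 0 with rfl | hv
  · simp
  · have hpos := enorm'_pos hv
    have hunit := sigMin_le_of_enorm'_eq_one A (enorm'_inv_smul_self hv)
    rwa [mulVec_smul, enorm'_smul, abs_of_pos (inv_pos.2 hpos), inv_mul_eq_div,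
      le_div_iff₀ hpos] at hunit

lemma dotProduct_mulVec_le_lamMax (A : Matrix (Fin m) (Fin m) ℝ) {v : Fin m → ℝ}
    (hv : enorm' v = 1) : v ⬝ᵥ (A *ᵥ v) ≤ lamMax A := by
  refine le_csSup ⟨sigMax A, ?_⟩ ⟨v, hv, rfl⟩
  rintro _ ⟨w, hw, rfl⟩
  calc w ⬝ᵥ (A *ᵥ w) ≤ enorm' w * enorm' (A *ᵥ w) := dotProduct_le_enorm'_mul_enorm' _ _
    _ ≤ sigMax A := by simpa [hw] using enorm'_mulVec_le_sigMax_mul A w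

lemma wnorm_transpose_mul_self (S : Matrix (Fin k) (Fin m) ℝ) (v : Fin m → ℝ) :
    wnorm (Sᵀ * S) v = enorm' (S *ᵥ v) := by
  rw [wnorm, enorm'_eq_sqrt_dotProduct_self, ← mulVec_mulVec, dotProduct_mulVec, vecMul_transpose]

lemma sigMax_le_sqrt_lamMax_transpose_mul_self (S : Matrix (Fin k) (Fin m) ℝ) :
    sigMax S ≤ √(lamMax (Sᵀ * S)) := by
  refine Real.sSup_le ?_ (Real.sqrt_nonneg _)
  rintro _ ⟨v, hv, rfl⟩
  rw [← wnorm_transpose_mul_self]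
  exact Real.sqrt_le_sqrt (dotProduct_mulVec_le_lamMax _ hv)

end SingularValues

section AveragedJacobian

variable {p m : ℕ}

lemma intervalIntegral_mulVec_apply {a b : ℝ} {A : ℝ → Matrix (Fin m) (Fin p) ℝ}
    (v : Fin p → ℝ) (i : Fin m)
    (hA : ∀ j, IntervalIntegrable (fun t ↦ A t i j) volume a b) :
    ∫ t in a..b, (A t *ᵥ v) i = ∑ j, (∫ t in a..b, A t i j) * v j := by
  simp only [mulVec, dotProduct]
  rw [intervalIntegral.integral_finsetSum fun j _ ↦ (hA j).mul_const _]
  simp only [intervalIntegral.integral_mul_const]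

variable {Θ : Set (Fin p → ℝ)} {g : (Fin p → ℝ) → (Fin m → ℝ)}
  {G : (Fin p → ℝ) → Matrix (Fin m) (Fin p) ℝ} {x y : Fin p → ℝ}

lemma hasDerivWithinAt_comp_segment (hΘ : StarConvex ℝ x Θ)
    (hG : ∀ θ ∈ Θ, HasFDerivWithinAt g (toCLM (G θ)) Θ θ) (hy : y ∈ Θ)
    {t : ℝ} (ht : t ∈ Icc (0 : ℝ) 1) :
    HasDerivWithinAt (fun r : ℝ ↦ g (x + r • (y - x))) (G (x + t • (y - x)) *ᵥ (y - x))
      (Icc 0 1) t := by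
  have hmem : MapsTo (fun r : ℝ ↦ x + r • (y - x)) (Icc 0 1) Θ :=
    fun r hr ↦ hΘ.add_smul_sub_mem hy hr.1 hr.2
  have hline : HasDerivWithinAt (fun r : ℝ ↦ x + r • (y - x)) (y - x) (Icc 0 1) t := by
    simpa using (((hasDerivAt_id t).smul_const (y - x)).const_add x).hasDerivWithinAt
  exact (hG _ (hmem ht)).comp_hasDerivWithinAt t hline hmem

lemma sub_eq_averagedJacobian_mulVec (hΘ : StarConvex ℝ x Θ)
    (hG : ∀ θ ∈ Θ, HasFDerivWithinAt g (toCLM (G θ)) Θ θ) (hGcont : ContinuousOn G Θ)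
    (hy : y ∈ Θ) {Gbar : Matrix (Fin m) (Fin p) ℝ}
    (hGbar : ∀ i j, Gbar i j = ∫ t in (0 : ℝ)..1, G (x + t • (y - x)) i j) :
    g y - g x = Gbar *ᵥ (y - x) := by
  have hGline : ContinuousOn (fun t : ℝ ↦ G (x + t • (y - x))) (uIcc 0 1) := by
    rw [uIcc_of_le zero_le_one]
    exact hGcont.comp (by fun_prop) fun t ht ↦ hΘ.add_smul_sub_mem hy ht.1 ht.2
  funext i
  have hderiv : ∀ t ∈ Icc (0 : ℝ) 1, HasDerivWithinAt (fun r : ℝ ↦ g (x + r • (y - x)) i)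
      ((G (x + t • (y - x)) *ᵥ (y - x)) i) (Icc 0 1) t := fun t ht ↦
    hasDerivWithinAt_pi.1 (hasDerivWithinAt_comp_segment hΘ hG hy ht) i
  have hderiv_cont : ContinuousOn (fun t : ℝ ↦ (G (x + t • (y - x)) *ᵥ (y - x)) i) (uIcc 0 1) :=
    ((continuous_apply i).comp (continuous_id.matrix_mulVec continuous_const)).comp_continuousOn
      hGline
  have hentry : ∀ j, IntervalIntegrable (fun t : ℝ ↦ G (x + t • (y - x)) i j) volume 0 1 :=
    fun j ↦ ((continuous_apply_apply i j).comp_continuousOn hGline).intervalIntegrable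
  calc (g y - g x) i = ∫ t in (0 : ℝ)..1, (G (x + t • (y - x)) *ᵥ (y - x)) i := by
        rw [intervalIntegral.integral_eq_sub_of_hasDerivAt_of_le zero_le_one
          (fun t ht ↦ (hderiv t ht).continuousWithinAt)
          (fun t ht ↦ (hderiv t (Ioo_subset_Icc_self ht)).hasDerivAt (Icc_mem_nhds ht.1 ht.2))
          hderiv_cont.intervalIntegrable]
        simp
    _ = (Gbar *ᵥ (y - x)) i := by
        rw [intervalIntegral_mulVec_apply _ _ hentry]
        simp only [mulVec, dotProduct, hGbar]

end AveragedJacobian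

section FirstOrderCondition

variable {k m p : ℕ} {A A₀ B : Matrix (Fin m) (Fin p) ℝ}

lemma sigMin_mul_enorm'_le_of_firstOrder {W : Matrix (Fin m) (Fin m) ℝ} {γ : Fin m → ℝ}
    {δ : Fin p → ℝ} (h : Aᵀ *ᵥ (W *ᵥ (γ + B *ᵥ δ)) = 0) :
    sigMin (Aᵀ * W * B) * enorm' δ ≤ enorm' (Aᵀ *ᵥ (W *ᵥ γ)) := by
  have hδ : (Aᵀ * W * B) *ᵥ δ = -(Aᵀ *ᵥ (W *ᵥ γ)) := by
    rw [mulVec_add, mulVec_add] at h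
    rw [← mulVec_mulVec, ← mulVec_mulVec]
    exact eq_neg_of_add_eq_zero_right h
  simpa only [hδ, enorm'_neg] using sigMin_mul_enorm'_le (Aᵀ * W * B) δ

lemma enorm'_score_le_sigMax_mul_wnorm (S : Matrix (Fin k) (Fin m) ℝ)
    (A : Matrix (Fin m) (Fin p) ℝ) (γ : Fin m → ℝ) :
    enorm' (Aᵀ *ᵥ ((Sᵀ * S) *ᵥ γ)) ≤ sigMax (Aᵀ * Sᵀ) * wnorm (Sᵀ * S) γ := by
  rw [wnorm_transpose_mul_self, ← mulVec_mulVec, mulVec_mulVec]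
  exact enorm'_mulVec_le_sigMax_mul _ _

lemma enorm'_weighted_le_sqrt_lamMax_mul_wnorm (S : Matrix (Fin k) (Fin m) ℝ) (γ : Fin m → ℝ) :
    enorm' ((Sᵀ * S) *ᵥ γ) ≤ √(lamMax (Sᵀ * S)) * wnorm (Sᵀ * S) γ := by
  calc enorm' ((Sᵀ * S) *ᵥ γ) ≤ sigMax Sᵀ * enorm' (S *ᵥ γ) := by
        rw [← mulVec_mulVec]
        exact enorm'_mulVec_le_sigMax_mul _ _
    _ ≤ √(lamMax (Sᵀ * S)) * wnorm (Sᵀ * S) γ := by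
        rw [sigMax_transpose, wnorm_transpose_mul_self]
        exact mul_le_mul_of_nonneg_right (sigMax_le_sqrt_lamMax_transpose_mul_self S)
          (enorm'_nonneg _)

lemma enorm'_score_le_sigMax_sub_mul {w : Fin m → ℝ} (h₀ : A₀ᵀ *ᵥ w = 0) :
    enorm' (Aᵀ *ᵥ w) ≤ sigMax (A - A₀) * enorm' w := by
  have hsub : Aᵀ *ᵥ w = (A - A₀)ᵀ *ᵥ w := by
    rw [transpose_sub, sub_mulVec, h₀, sub_zero]
  rw [hsub, ← sigMax_transpose]
  exact enorm'_mulVec_le_sigMax_mul _ _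

variable {S : Matrix (Fin k) (Fin m) ℝ} {γ : Fin m → ℝ} {δ : Fin p → ℝ} {L Whi s C : ℝ}

lemma enorm'_le_mul_wnorm_of_firstOrder (h : Aᵀ *ᵥ ((Sᵀ * S) *ᵥ (γ + B *ᵥ δ)) = 0)
    (hspos : 0 < s) (hs : s ≤ sigMin (Aᵀ * (Sᵀ * S) * B)) (hC : sigMax (Aᵀ * Sᵀ) ≤ s * C) :
    enorm' δ ≤ C * wnorm (Sᵀ * S) γ := by
  refine le_of_mul_le_mul_left ?_ hspos
  calc s * enorm' δ ≤ sigMin (Aᵀ * (Sᵀ * S) * B) * enorm' δ :=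
        mul_le_mul_of_nonneg_right hs (enorm'_nonneg δ)
    _ ≤ enorm' (Aᵀ *ᵥ ((Sᵀ * S) *ᵥ γ)) := sigMin_mul_enorm'_le_of_firstOrder h
    _ ≤ sigMax (Aᵀ * Sᵀ) * wnorm (Sᵀ * S) γ := enorm'_score_le_sigMax_mul_wnorm S A γ
    _ ≤ s * C * wnorm (Sᵀ * S) γ := mul_le_mul_of_nonneg_right hC (Real.sqrt_nonneg _)
    _ = s * (C * wnorm (Sᵀ * S) γ) := mul_assoc _ _ _

lemma sigMin_mul_enorm'_le_mul_wnorm_of_firstOrder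
    (h : Aᵀ *ᵥ ((Sᵀ * S) *ᵥ (γ + B *ᵥ δ)) = 0) (h₀ : A₀ᵀ *ᵥ ((Sᵀ * S) *ᵥ γ) = 0)
    (hWhi : lamMax (Sᵀ * S) ≤ Whi) (hA : sigMax (A - A₀) ≤ L * enorm' δ) :
    sigMin (Aᵀ * (Sᵀ * S) * B) * enorm' δ ≤ L * enorm' δ * (√Whi * wnorm (Sᵀ * S) γ) := by
  have hWγ : enorm' ((Sᵀ * S) *ᵥ γ) ≤ √Whi * wnorm (Sᵀ * S) γ :=
    (enorm'_weighted_le_sqrt_lamMax_mul_wnorm S γ).trans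
      (mul_le_mul_of_nonneg_right (Real.sqrt_le_sqrt hWhi) (Real.sqrt_nonneg _))
  calc sigMin (Aᵀ * (Sᵀ * S) * B) * enorm' δ ≤ enorm' (Aᵀ *ᵥ ((Sᵀ * S) *ᵥ γ)) :=
        sigMin_mul_enorm'_le_of_firstOrder h
    _ ≤ sigMax (A - A₀) * enorm' ((Sᵀ * S) *ᵥ γ) := enorm'_score_le_sigMax_sub_mul h₀
    _ ≤ L * enorm' δ * (√Whi * wnorm (Sᵀ * S) γ) :=
        mul_le_mul hA hWγ (enorm'_nonneg _) ((sigMax_nonneg _).trans hA)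

end FirstOrderCondition

theorem local_optima_second_bound_general
    {k p m : ℕ} (Θ : Set (Fin p → ℝ))
    (g : (Fin p → ℝ) → (Fin m → ℝ))
    (G : (Fin p → ℝ) → Matrix (Fin m) (Fin p) ℝ)
    (Gbar : (Fin p → ℝ) → Matrix (Fin m) (Fin p) ℝ)
    (W : Matrix (Fin m) (Fin m) ℝ) (S : Matrix (Fin k) (Fin m) ℝ)
    (θhat : Fin p → ℝ) (L Whi s C₁ : ℝ)
    (hΘ : StarConvex ℝ θhat Θ)
    (hG : ∀ θ ∈ Θ, HasFDerivWithinAt g (toCLM (G θ)) Θ θ)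
    (hGcont : ContinuousOn G Θ)
    (hL : 0 ≤ L)
    (hLip : ∀ θ ∈ Θ, sigMax (G θ - G θhat) ≤ L * enorm' (θ - θhat))
    (hSW : Sᵀ * S = W)
    (hWmax : lamMax W ≤ Whi)
    (hfoc : (G θhat)ᵀ *ᵥ (W *ᵥ g θhat) = 0)
    (hGbar : ∀ θ₁ : Fin p → ℝ, ∀ i j,
      Gbar θ₁ i j = ∫ t in (0 : ℝ)..1, G (θhat + t • (θ₁ - θhat)) i j)
    (hs : s = sInf ((fun θ₁ ↦ sigMin ((G θ₁)ᵀ * W * Gbar θ₁)) '' Θ))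
    (hspos : 0 < s)
    (hbdd : BddAbove ((fun θ ↦ sigMax ((G θ)ᵀ * Sᵀ)) '' Θ))
    (hC₁ : C₁ = sSup ((fun θ ↦ sigMax ((G θ)ᵀ * Sᵀ)) '' Θ) / s) :
    ∀ θ ∈ Θ, (G θ)ᵀ *ᵥ (W *ᵥ g θ) = 0 →
      enorm' (θ - θhat) ≤ (L * √Whi * C₁ / s) * wnorm W (g θhat) ^ 2 := by
  subst hSW
  intro θ hθ hfocθ
  have hs_le : s ≤ sigMin ((G θ)ᵀ * (Sᵀ * S) * Gbar θ) := by
    refine hs ▸ csInf_le ⟨0, ?_⟩ (mem_image_of_mem _ hθ)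
    rintro _ ⟨_, -, rfl⟩
    exact sigMin_nonneg _
  have hle_C₁ : sigMax ((G θ)ᵀ * Sᵀ) ≤ s * C₁ := by
    rw [hC₁, mul_div_cancel₀ _ hspos.ne']
    exact le_csSup hbdd (mem_image_of_mem _ hθ)
  have hexp : g θ = g θhat + Gbar θ *ᵥ (θ - θhat) :=
    sub_eq_iff_eq_add'.1 (sub_eq_averagedJacobian_mulVec hΘ hG hGcont hθ (hGbar θ))
  rw [hexp] at hfocθ
  set d := enorm' (θ - θhat)
  set w := wnorm (Sᵀ * S) (g θhat)
  have hw : 0 ≤ w := Real.sqrt_nonneg _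
  have hfirst : d ≤ C₁ * w := enorm'_le_mul_wnorm_of_firstOrder hfocθ hspos hs_le hle_C₁
  rw [div_mul_eq_mul_div, le_div_iff₀' hspos]
  calc s * d ≤ sigMin ((G θ)ᵀ * (Sᵀ * S) * Gbar θ) * d :=
        mul_le_mul_of_nonneg_right hs_le (enorm'_nonneg _)
    _ ≤ L * d * (√Whi * w) :=
        sigMin_mul_enorm'_le_mul_wnorm_of_firstOrder hfocθ hfoc hWmax (hLip θ hθ)
    _ ≤ L * (C₁ * w) * (√Whi * w) := by gcongr
    _ = L * √Whi * C₁ * w ^ 2 := by ring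

/-- Local optima are second-order close to the GMM minimizer
(deterministic core of Proposition 2). -/
theorem local_optima_second_bound
    {p m : ℕ} (Θ : Set (Fin p → ℝ))
    (g : (Fin p → ℝ) → (Fin m → ℝ))
    (G : (Fin p → ℝ) → Matrix (Fin m) (Fin p) ℝ)
    (Gbar : (Fin p → ℝ) → Matrix (Fin m) (Fin p) ℝ)
    (W S : Matrix (Fin m) (Fin m) ℝ)
    (θhat : Fin p → ℝ) (L Whi s C₁ : ℝ)
    (hΘconv : Convex ℝ Θ) (hΘcomp : IsCompact Θ)
    (hg : ContDiffOn ℝ 1 g Θ)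
    (hG : ∀ θ ∈ Θ, HasFDerivWithinAt g (toCLM (G θ)) Θ θ)
    (hL : 0 ≤ L)
    (hLip : ∀ θ₁ ∈ Θ, ∀ θ₂ ∈ Θ, sigMax (G θ₁ - G θ₂) ≤ L * enorm' (θ₁ - θ₂))
    (hW : W.PosDef) (hS : S.PosDef) (hSW : S * S = W)
    (hWmax : lamMax W ≤ Whi)
    (hθhat : θhat ∈ Θ)
    (hfoc : (G θhat)ᵀ *ᵥ (W *ᵥ g θhat) = 0)
    (hGbar : ∀ θ₁ : Fin p → ℝ, ∀ i j,
      Gbar θ₁ i j = ∫ t in (0:ℝ)..1, G (θhat + t • (θ₁ - θhat)) i j)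
    (hs : s = sInf ((fun θ₁ => sigMin ((G θ₁)ᵀ * W * Gbar θ₁)) '' Θ))
    (hspos : 0 < s)
    (hC₁ : C₁ = sSup ((fun θ => sigMax ((G θ)ᵀ * S)) '' Θ) / s) :
    ∀ θ ∈ Θ, (G θ)ᵀ *ᵥ (W *ᵥ g θ) = 0 →
      enorm' (θ - θhat) ≤ (L * Real.sqrt Whi * C₁ / s) * wnorm W (g θhat) ^ 2 := by
  have hST : Sᵀ = S := by simpa using hS.isHermitian.eq
  have hGcont := continuousOn_of_sigMax_sub_le hLip
  have hbdd : BddAbove ((fun θ ↦ sigMax ((G θ)ᵀ * Sᵀ)) '' Θ) :=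
    hΘcomp.bddAbove_image (continuous_sigMax.comp_continuousOn (by fun_prop))
  exact local_optima_second_bound_general Θ g G Gbar W S θhat L Whi s C₁ (hΘconv.starConvex hθhat)
    hG hGcont hL (fun θ hθ ↦ hLip θ hθ θhat hθhat) (by rw [hST, hSW]) hWmax hfoc hGbar hs hspos
    hbdd (by rw [hST, hC₁])
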